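/- Let q and q' be nondegenerate quadratic forms on finite-dimensional vector spaces V and V' over the field F_2 with two elements, with dim V = dim V'. Then q and q' are isometric (there is an F_2-linear isomorphism σ : V → V' with q'(σ(x)) = q(x) for all x) if and only if the number of elements x ∈ V with q(x) = 1 equals the number of elements x' ∈ V' with q'(x') = 1. Equivalently, nondegenerate quadratic forms over F_2 are classified up to isometry by their dimension together with their Arf invariant. -/

import Mathlib

open QuadraticMap

theorem aux_polar_self {V : Type*} [AddCommGroup V] [Module (ZMod 2) V]
    (q : QuadraticForm (ZMod 2) V) (x : V) : polar q x x = 0 := by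
  rw [QuadraticMap.polar_self]
  generalize q x = a
  revert a; decide

/-- Splitting off a hyperbolic plane. -/
theorem aux_split {V : Type*} [AddCommGroup V] [Module (ZMod 2) V]
    (q : QuadraticForm (ZMod 2) V) (hq : (polarBilin q).Nondegenerate)
    (x : V) (hx : x ≠ 0) (hqx : q x = 0) :
    ∃ (W : Submodule (ZMod 2) V) (e : V ≃ₗ[ZMod 2] (ZMod 2 × ZMod 2) × W),
      (polarBilin (q.comp W.subtype)).Nondegenerate ∧
      ∀ v, q v = (e v).1.1 * (e v).1.2 + (q.comp W.subtype) (e v).2 := by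
  have h1 : ∃ y, polar q x y = 1 := by
    by_contra! h
    apply hx
    apply hq.1 x
    intro y
    have := h y
    rw [polarBilin_apply_apply]
    generalize polar q x y = a at *
    revert a; decide
  have h2 : ∃ y, polar q x y = 1 ∧ q y = 0 := by
    obtain ⟨y, hy⟩ := h1
    by_cases h : q y = 0
    · exact ⟨y, hy, h⟩
    · refine ⟨x + y, ?_, ?_⟩
      · rw [polar_add_right, aux_polar_self, hy, zero_add]
      · rw [QuadraticMap.map_add q, hy, hqx]
        generalize q y = a at *
        revert a; decide
  obtain ⟨y, hxy, hqy⟩ := h2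
  have hyx : polar q y x = 1 := by rw [polar_comm, hxy]
  have hxx := aux_polar_self q x
  have hyy := aux_polar_self q y
  let W : Submodule (ZMod 2) V :=
    LinearMap.ker (((polarBilin q) x).prod ((polarBilin q) y))
  have memW : ∀ v, v ∈ W ↔ polar q x v = 0 ∧ polar q y v = 0 := by
    intro v
    simp [W, LinearMap.mem_ker, LinearMap.prod_apply]
  let f : (ZMod 2 × ZMod 2) × W →ₗ[ZMod 2] V :=
    { toFun := fun p => p.1.1 • x + p.1.2 • y + (p.2 : V)
      map_add' := by intro p r; simp; module
      map_smul' := by intro c p; simp; module }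
  have hf : ∀ p, f p = p.1.1 • x + p.1.2 • y + (p.2 : V) := fun p => rfl
  have px : ∀ p, polar q x (f p) = p.1.2 := by
    intro p
    rw [hf, polar_add_right, polar_add_right, polar_smul_right, polar_smul_right, hxx, hxy,
      ((memW _).1 p.2.2).1]
    simp
  have py : ∀ p, polar q y (f p) = p.1.1 := by
    intro p
    rw [hf, polar_add_right, polar_add_right, polar_smul_right, polar_smul_right, hyy, hyx,
      ((memW _).1 p.2.2).2]
    simp
  have hbij : Function.Bijective f := by
    constructor
    · rw [← LinearMap.ker_eq_bot, LinearMap.ker_eq_bot']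
      intro p hp
      have a1 := px p
      have a2 := py p
      rw [hp] at a1 a2
      simp at a1 a2
      have := hf p
      rw [hp, ← a1, ← a2] at this
      simp at this
      ext
      · simp [← a2]
      · simp [← a1]
      · simp [← this]
    · intro v
      have hw : v - polar q y v • x - polar q x v • y ∈ W := by
        rw [memW]
        simp only [polar_sub_right, polar_smul_right, hxx, hxy, hyx, hyy]
        simp
      refine ⟨((polar q y v, polar q x v), ⟨_, hw⟩), ?_⟩
      rw [hf]
      simp only
      abel
  let e := LinearEquiv.ofBijective f hbij
  have hqf : ∀ p, q (f p) = p.1.1 * p.1.2 + q (p.2 : V) := by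
    intro p
    rw [hf, QuadraticMap.map_add q (_ + _), QuadraticMap.map_add q, polar_add_left]
    simp only [polar_smul_left, polar_smul_right, QuadraticMap.map_smul, hqx, hqy, hxy,
      ((memW _).1 p.2.2).1, ((memW _).1 p.2.2).2]
    simp [mul_comm]
  refine ⟨W, e.symm, ?_, ?_⟩
  · have key : ∀ w : W, (∀ u : W, polar q (w : V) u = 0) → w = 0 := by
      intro w hw
      have : (w : V) = 0 := by
        apply hq.1
        intro v
        obtain ⟨p, rfl⟩ := hbij.2 v
        rw [polarBilin_apply_apply, hf, polar_add_right, polar_add_right, polar_smul_right,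
          polar_smul_right, hw, polar_comm q _ x, polar_comm q _ y,
          ((memW _).1 w.2).1, ((memW _).1 w.2).2]
        simp
      exact Subtype.ext this
    have hp : ∀ u w : W, polarBilin (q.comp W.subtype) u w = polar q (u : V) w := by
      intro u w
      simp [polar]
    constructor
    · intro w hw
      exact key w fun u => by rw [← hp]; exact hw u
    · intro w hw
      exact key w fun u => by rw [polar_comm, ← hp]; exact hw u
  · intro v
    have := hqf (e.symm v)
    rw [show f (e.symm v) = v from e.apply_symm_apply v] at this
    exact this

theorem aux_count {V W : Type*} [AddCommGroup V] [Module (ZMod 2) V] [AddCommGroup W]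
    [Module (ZMod 2) W] [Finite W] (q : V → ZMod 2) (r : W → ZMod 2)
    (e : V ≃ₗ[ZMod 2] (ZMod 2 × ZMod 2) × W)
    (h : ∀ v, q v = (e v).1.1 * (e v).1.2 + r (e v).2) :
    Nat.card {v // q v = 1} = 2 * Nat.card {w // r w = 1} + Nat.card W := by
  have e1 : {v // q v = 1} ≃ {p : (ZMod 2 × ZMod 2) × W // p.1.1 * p.1.2 + r p.2 = 1} :=
    e.toEquiv.subtypeEquiv (fun v => by rw [h]; rfl)
  have e2 : {p : (ZMod 2 × ZMod 2) × W // p.1.1 * p.1.2 + r p.2 = 1} ≃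
      Σ p : ZMod 2 × ZMod 2, {w : W // p.1 * p.2 + r w = 1} :=
    { toFun := fun p => ⟨p.1.1, p.1.2, p.2⟩
      invFun := fun s => ⟨(s.1, s.2.1), s.2.2⟩
      left_inv := fun _ => rfl
      right_inv := fun _ => rfl }
  have e3 : {w : W // 1 + r w = 1} ≃ {w : W // ¬ r w = 1} :=
    Equiv.subtypeEquivRight fun w => by
      generalize r w = a
      revert a; decide
  have e4 : Nat.card {w : W // r w = 1} + Nat.card {w : W // ¬ r w = 1} = Nat.card W := by
    classical
    rw [← Nat.card_sum]
    exact Nat.card_congr (Equiv.sumCompl _)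
  have hu : (Finset.univ : Finset (ZMod 2)) = {0, 1} := by decide
  rw [Nat.card_congr (e1.trans e2), Nat.card_sigma, Fintype.sum_prod_type]
  simp only [hu, Finset.sum_pair (zero_ne_one' (ZMod 2)), zero_mul, mul_zero, mul_one, zero_add]
  rw [Nat.card_congr e3]
  omega

theorem aux_aniso {V V' : Type*} [AddCommGroup V] [Module (ZMod 2) V]
    [AddCommGroup V'] [Module (ZMod 2) V']
    [FiniteDimensional (ZMod 2) V] [FiniteDimensional (ZMod 2) V']
    (q : QuadraticForm (ZMod 2) V) (q' : QuadraticForm (ZMod 2) V')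
    (hdim : Module.finrank (ZMod 2) V = Module.finrank (ZMod 2) V')
    (hc : Nat.card {x : V // q x = 1} = Nat.card {x' : V' // q' x' = 1})
    (ha : ∀ x, x ≠ 0 → q x = 1) :
    ∃ σ : V ≃ₗ[ZMod 2] V', ∀ x : V, q' (σ x) = q x := by
  have σ : V ≃ₗ[ZMod 2] V' := LinearEquiv.ofFinrankEq V V' hdim
  have : Finite V := Module.finite_of_finite (ZMod 2)
  have : Finite V' := Module.finite_of_finite (ZMod 2)
  have hs : {x' : V' | q' x' = 1} = {x' | x' ≠ 0} := by
    apply Set.eq_of_subset_of_ncard_le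
    · intro x hx h0
      simp [h0] at hx
    · have h1 : {x : V | x ≠ 0} = {x | q x = 1} := by
        ext x
        exact ⟨ha x, fun hx h0 => by simp [h0] at hx⟩
      have h2 : Set.ncard {x' : V' | x' ≠ 0} = Set.ncard {x : V | x ≠ 0} :=
        (Nat.card_congr (σ.toEquiv.subtypeEquiv (fun v => by simp))).symm
      rw [h2, h1]
      exact hc.le
    · exact Set.toFinite _
  refine ⟨σ, fun x => ?_⟩
  by_cases hx : x = 0
  · simp [hx]
  · rw [ha x hx]
    have : σ x ∈ {x' : V' | x' ≠ 0} := by simpa using hx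
    rw [← hs] at this
    exact this

universe u v

theorem aux_main (n : ℕ) : ∀ (V : Type u) (V' : Type v) [AddCommGroup V] [Module (ZMod 2) V]
    [AddCommGroup V'] [Module (ZMod 2) V']
    [FiniteDimensional (ZMod 2) V] [FiniteDimensional (ZMod 2) V']
    (q : QuadraticForm (ZMod 2) V) (q' : QuadraticForm (ZMod 2) V')
    (_ : (polarBilin q).Nondegenerate) (_ : (polarBilin q').Nondegenerate)
    (_ : Module.finrank (ZMod 2) V = n) (_ : Module.finrank (ZMod 2) V' = n)
    (_ : Nat.card {x : V // q x = 1} = Nat.card {x' : V' // q' x' = 1}),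
    (∃ σ : V ≃ₗ[ZMod 2] V', ∀ x : V, q' (σ x) = q x) := by
  induction n using Nat.strong_induction_on with
  | _ n ih =>
  intro V V' _ _ _ _ _ _ q q' hq hq' hn hn' hc
  have d : ∀ a : ZMod 2, a ≠ 1 → a = 0 := by decide
  by_cases h : ∀ x, x ≠ 0 → q x = 1
  · exact aux_aniso q q' (hn.trans hn'.symm) hc h
  by_cases h' : ∀ x, x ≠ 0 → q' x = 1
  · obtain ⟨σ, hσ⟩ := aux_aniso q' q (hn'.trans hn.symm) hc.symm h'
    exact ⟨σ.symm, fun x => by rw [← hσ, σ.apply_symm_apply]⟩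
  push Not at h h'
  obtain ⟨x, hx, hqx⟩ := h
  obtain ⟨x', hx', hqx'⟩ := h'
  obtain ⟨W, e, hW, he⟩ := aux_split q hq x hx (d _ hqx)
  obtain ⟨W', e', hW', he'⟩ := aux_split q' hq' x' hx' (d _ hqx')
  have : Finite V := Module.finite_of_finite (ZMod 2)
  have : Finite V' := Module.finite_of_finite (ZMod 2)
  have f1 := e.finrank_eq
  have f2 := e'.finrank_eq
  simp only [Module.finrank_prod, Module.finrank_self] at f1 f2
  have hWW : Module.finrank (ZMod 2) W' = Module.finrank (ZMod 2) W := by omega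
  have c1 := aux_count q _ e he
  have c2 := aux_count q' _ e' he'
  have c3 : Nat.card W = Nat.card W' :=
    Nat.card_congr (LinearEquiv.ofFinrankEq W W' hWW.symm).toEquiv
  obtain ⟨τ, hτ⟩ := ih (Module.finrank (ZMod 2) W) (by omega) W W' _ _ hW hW' rfl hWW (by omega)
  refine ⟨e.trans (((LinearEquiv.refl _ _).prodCongr τ).trans e'.symm), fun v => ?_⟩
  rw [he', he]
  simp only [LinearEquiv.trans_apply, LinearEquiv.apply_symm_apply, LinearEquiv.prodCongr_apply,
    LinearEquiv.refl_apply, hτ]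

/-- Nondegenerate quadratic forms over the two-element field `F₂` on spaces of the same
finite dimension are isometric if and only if they take the value `1` equally often;
i.e. they are classified up to isometry by dimension together with the Arf invariant. -/
theorem isometric_iff_card_ones_eq
    {V V' : Type*} [AddCommGroup V] [Module (ZMod 2) V]
    [AddCommGroup V'] [Module (ZMod 2) V']
    [FiniteDimensional (ZMod 2) V] [FiniteDimensional (ZMod 2) V']
    (q : QuadraticForm (ZMod 2) V) (q' : QuadraticForm (ZMod 2) V')
    (hq : (polarBilin q).Nondegenerate) (hq' : (polarBilin q').Nondegenerate)
    (hdim : Module.finrank (ZMod 2) V = Module.finrank (ZMod 2) V') :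
    (∃ σ : V ≃ₗ[ZMod 2] V', ∀ x : V, q' (σ x) = q x) ↔
      Nat.card {x : V // q x = 1} = Nat.card {x' : V' // q' x' = 1} := by
  constructor
  · rintro ⟨σ, hσ⟩
    exact Nat.card_congr (σ.toEquiv.subtypeEquiv (fun v => by rw [← hσ]; rfl))
  · exact aux_main _ V V' q q' hq hq' hdim rfl
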